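/- arXiv:2008.13179 — 2 statements merged into one kernel-verified Lean document; each statement's English description precedes it below -/
import Mathlib

section
/- Under the Setup, if equations (N.9a), (N.9b), (N.9c) hold on O, then equations (36a), (36b), (36c) hold on O. -/
open Real

/-- Partial derivative in the first coordinate `ϖ`. -/
noncomputable def d1 (f : ℝ × ℝ → ℝ) : ℝ × ℝ → ℝ := fun p => fderiv ℝ f p (1, 0)

/-- Partial derivative in the second coordinate `z`. -/
noncomputable def d3 (f : ℝ × ℝ → ℝ) : ℝ × ℝ → ℝ := fun p => fderiv ℝ f p (0, 1)

/-!
Each of the three Ricci components splits into contributions of single coordinate directions, and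
so do the left-hand sides of the reduced equations. Along one direction, the product rule gives
`∂f ∂l + (∂k)² = e^{4F} (∂A)² + 4 Π ∂Π ∂F - 4 Π² (∂F)²`, and with it the Ricci contributions become
linear combinations of the reduced ones. Writing `𝓕`, `𝓐`, `𝓟` for the left-hand sides of (N.9a),
(N.9b), (N.9c), the sum over the directions is
`e^m R₀₀ = e^{2F} 𝓕`, `e^m R₀₂ = e^{2F} (A 𝓕 + 𝓐 / 2)` and
`e^m R₂₂ = (e^{2F} A² + e^{-2F} Π²) 𝓕 + e^{2F} A 𝓐 - e^{-2F} Π 𝓟`.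
Inserting the reduced equations leaves identities for the sources that are polynomial in
`w = (ε + P) e^{-2G}`, `P` and `Ω / c`.
-/

theorem exp_four_mul (x : ℝ) : exp (4 * x) = exp (2 * x) ^ 2 := by
  rw [← exp_nat_mul]; ring_nf

variable {V : Type*} [NormedAddCommGroup V] [NormedSpace ℝ V]

/-- The derivative along the constant vector field `v`, as an operator on functions so that it can
be iterated; `d1` and `d3` are the cases `v = (1, 0)` and `v = (0, 1)`. -/
noncomputable def dirDeriv (v : V) (g : V → ℝ) : V → ℝ := fun p => fderiv ℝ g p v

section DirDeriv

variable {v p : V} {g h : V → ℝ}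

theorem dirDeriv_congr (hgh : g =ᶠ[nhds p] h) : dirDeriv v g p = dirDeriv v h p := by
  simp only [dirDeriv, hgh.fderiv_eq]

theorem dirDeriv_add (hg : DifferentiableAt ℝ g p) (hh : DifferentiableAt ℝ h p) :
    dirDeriv v (fun q => g q + h q) p = dirDeriv v g p + dirDeriv v h p := by
  simp [dirDeriv, fderiv_fun_add hg hh]

theorem dirDeriv_mul (hg : DifferentiableAt ℝ g p) (hh : DifferentiableAt ℝ h p) :
    dirDeriv v (fun q => g q * h q) p = g p * dirDeriv v h p + h p * dirDeriv v g p := by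
  simp [dirDeriv, fderiv_fun_mul hg hh]

theorem dirDeriv_exp (hg : DifferentiableAt ℝ g p) :
    dirDeriv v (fun q => exp (g q)) p = exp (g p) * dirDeriv v g p := by
  simp [dirDeriv, fderiv_exp hg]

theorem dirDeriv_div (hg : DifferentiableAt ℝ g p) (hh : DifferentiableAt ℝ h p) (hp : h p ≠ 0) :
    dirDeriv v (fun q => g q / h q) p
      = (dirDeriv v g p * h p - g p * dirDeriv v h p) / h p ^ 2 := by
  have hdiv : DifferentiableAt ℝ (fun q => g q / h q) p := by fun_prop (disch := assumption)
  simpa [dirDeriv] using (hdiv.hasFDerivAt.hasLineDerivAt v).unique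
    (HasDerivAt.fun_div (hg.hasFDerivAt.hasLineDerivAt v) (hh.hasFDerivAt.hasLineDerivAt v)
      (by simpa using hp))

theorem eventually_differentiableAt_of_contDiffAt (hg : ContDiffAt ℝ 2 g p) :
    ∀ᶠ q in nhds p, DifferentiableAt ℝ g q :=
  (hg.eventually (by simp)).mono fun _ hq => hq.differentiableAt two_ne_zero

theorem differentiableAt_dirDeriv (hg : ContDiffAt ℝ 2 g p) :
    DifferentiableAt ℝ (dirDeriv v g) p :=
  ((hg.fderiv_right (m := 1) (by norm_num)).differentiableAt one_ne_zero).clm_apply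
    (differentiableAt_const v)

end DirDeriv

/-- `HasTwoJetAt v g g' g'' p` says that `g` is `C²` at `p`, with first and second derivatives `g'`
and `g''` at `p` along `v`. -/
structure HasTwoJetAt (v : V) (g : V → ℝ) (g' g'' : ℝ) (p : V) : Prop where
  contDiffAt : ContDiffAt ℝ 2 g p
  fst : dirDeriv v g p = g'
  snd : dirDeriv v (dirDeriv v g) p = g''

namespace HasTwoJetAt

variable {v p : V} {g h : V → ℝ} {g' g'' h' h'' : ℝ}

theorem of_contDiffAt (v : V) (hg : ContDiffAt ℝ 2 g p) :
    HasTwoJetAt v g (dirDeriv v g p) (dirDeriv v (dirDeriv v g) p) p :=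
  ⟨hg, rfl, rfl⟩

protected theorem differentiableAt (hg : HasTwoJetAt v g g' g'' p) : DifferentiableAt ℝ g p :=
  hg.contDiffAt.differentiableAt two_ne_zero

theorem congr_derivs {a b : ℝ} (hg : HasTwoJetAt v g g' g'' p) (ha : g' = a) (hb : g'' = b) :
    HasTwoJetAt v g a b p :=
  ha ▸ hb ▸ hg

theorem differentiableAt_fst (hg : HasTwoJetAt v g g' g'' p) :
    DifferentiableAt ℝ (dirDeriv v g) p :=
  differentiableAt_dirDeriv hg.contDiffAt

protected theorem add (hg : HasTwoJetAt v g g' g'' p) (hh : HasTwoJetAt v h h' h'' p) :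
    HasTwoJetAt v (fun q => g q + h q) (g' + h') (g'' + h'') p where
  contDiffAt := hg.contDiffAt.add hh.contDiffAt
  fst := by rw [dirDeriv_add hg.differentiableAt hh.differentiableAt, hg.fst, hh.fst]
  snd := by
    have sum_rule : dirDeriv v (fun q => g q + h q) =ᶠ[nhds p]
        fun q => dirDeriv v g q + dirDeriv v h q := by
      filter_upwards [eventually_differentiableAt_of_contDiffAt hg.contDiffAt,
        eventually_differentiableAt_of_contDiffAt hh.contDiffAt] with q using dirDeriv_add
    rw [dirDeriv_congr sum_rule, dirDeriv_add hg.differentiableAt_fst hh.differentiableAt_fst,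
      hg.snd, hh.snd]

protected theorem mul (hg : HasTwoJetAt v g g' g'' p) (hh : HasTwoJetAt v h h' h'' p) :
    HasTwoJetAt v (fun q => g q * h q) (g p * h' + h p * g')
      (g p * h'' + 2 * g' * h' + h p * g'') p where
  contDiffAt := hg.contDiffAt.mul hh.contDiffAt
  fst := by rw [dirDeriv_mul hg.differentiableAt hh.differentiableAt, hg.fst, hh.fst]
  snd := by
    have product_rule : dirDeriv v (fun q => g q * h q) =ᶠ[nhds p]
        fun q => g q * dirDeriv v h q + h q * dirDeriv v g q := by
      filter_upwards [eventually_differentiableAt_of_contDiffAt hg.contDiffAt,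
        eventually_differentiableAt_of_contDiffAt hh.contDiffAt] with q using dirDeriv_mul
    rw [dirDeriv_congr product_rule,
      dirDeriv_add (hg.differentiableAt.fun_mul hh.differentiableAt_fst)
        (hh.differentiableAt.fun_mul hg.differentiableAt_fst),
      dirDeriv_mul hg.differentiableAt hh.differentiableAt_fst,
      dirDeriv_mul hh.differentiableAt hg.differentiableAt_fst, hg.fst, hh.fst, hg.snd, hh.snd]
    ring

protected theorem const (v : V) (a : ℝ) (p : V) : HasTwoJetAt v (fun _ => a) 0 0 p where
  contDiffAt := contDiffAt_const
  fst := by simp [dirDeriv]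
  snd := by simp +unfoldPartialApp [dirDeriv]

protected theorem const_mul (a : ℝ) (hg : HasTwoJetAt v g g' g'' p) :
    HasTwoJetAt v (fun q => a * g q) (a * g') (a * g'') p := by
  simpa using (HasTwoJetAt.const v a p).mul hg

protected theorem neg (hg : HasTwoJetAt v g g' g'' p) :
    HasTwoJetAt v (fun q => -g q) (-g') (-g'') p := by
  simpa using hg.const_mul (-1)

protected theorem sq (hg : HasTwoJetAt v g g' g'' p) :
    HasTwoJetAt v (fun q => g q ^ 2) (2 * g p * g') (2 * (g' ^ 2 + g p * g'')) p := by
  simpa only [← pow_two] using (hg.mul hg).congr_derivs (by ring) (by ring)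

protected theorem exp (hg : HasTwoJetAt v g g' g'' p) :
    HasTwoJetAt v (fun q => exp (g q)) (exp (g p) * g') (exp (g p) * (g'' + g' ^ 2)) p where
  contDiffAt := hg.contDiffAt.exp
  fst := by rw [dirDeriv_exp hg.differentiableAt, hg.fst]
  snd := by
    have chain_rule : dirDeriv v (fun q => exp (g q)) =ᶠ[nhds p]
        fun q => exp (g q) * dirDeriv v g q :=
      (eventually_differentiableAt_of_contDiffAt hg.contDiffAt).mono fun _ => dirDeriv_exp
    rw [dirDeriv_congr chain_rule, dirDeriv_mul hg.differentiableAt.exp hg.differentiableAt_fst,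
      dirDeriv_exp hg.differentiableAt, hg.fst, hg.snd]
    ring

theorem dirDeriv_fst_div (hg : HasTwoJetAt v g g' g'' p) (hh : HasTwoJetAt v h h' h'' p)
    (hp : h p ≠ 0) :
    dirDeriv v (fun q => dirDeriv v g q / h q) p = (g'' * h p - g' * h') / h p ^ 2 := by
  rw [dirDeriv_div hg.differentiableAt_fst hh.differentiableAt hp, hg.fst, hg.snd, hh.fst]

end HasTwoJetAt

/-- The metric coefficient `f = e^{2F}` of the Killing block `f c² dt² - 2k c dt dφ - l dφ²`. -/
noncomputable def metricF (F : V → ℝ) : V → ℝ := fun p => exp (2 * F p)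

/-- The metric coefficient `k = -e^{2F} A` of the Killing block. -/
noncomputable def metricK (F A : V → ℝ) : V → ℝ := fun p => -exp (2 * F p) * A p

/-- The metric coefficient `l = -e^{2F} A² + e^{-2F} Π²` of the Killing block; `W` stands for `Π`,
so that `W² = f l + k²`. -/
noncomputable def metricL (F A W : V → ℝ) : V → ℝ :=
  fun p => -exp (2 * F p) * A p ^ 2 + exp (-(2 * F p)) * W p ^ 2

/-- The contribution of the direction `v` to `Σ = ∇f · ∇l + |∇k|²`. -/
noncomputable def killingSigma (v : V) (F A W : V → ℝ) (p : V) : ℝ :=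
  dirDeriv v (metricF F) p * dirDeriv v (metricL F A W) p + dirDeriv v (metricK F A) p ^ 2

/-- The contribution of the direction `v` to the second-order expression
`∇ · (∇g / Π) + g Σ / Π³` that gives the Ricci components for `g = f, k, l`. -/
noncomputable def ricciTerm (v : V) (F A W g : V → ℝ) (p : V) : ℝ :=
  dirDeriv v (fun q => dirDeriv v g q / W q) p + g p * killingSigma v F A W p / W p ^ 3

/-- The contribution of the direction `v` to the left-hand side of (N.9a). -/
noncomputable def potentialTerm (v : V) (F A W : V → ℝ) (p : V) : ℝ :=
  dirDeriv v (dirDeriv v F) p + dirDeriv v W p * dirDeriv v F p / W p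
    + exp (4 * F p) / (2 * W p ^ 2) * dirDeriv v A p ^ 2

/-- The contribution of the direction `v` to the left-hand side of (N.9b). -/
noncomputable def twistTerm (v : V) (F A W : V → ℝ) (p : V) : ℝ :=
  dirDeriv v (dirDeriv v A) p - dirDeriv v W p * dirDeriv v A p / W p
    + 4 * (dirDeriv v F p * dirDeriv v A p)

section KillingBlock

variable {v p : V} {F A W : V → ℝ} {F' F'' A' A'' W' W'' : ℝ}

theorem hasTwoJetAt_metricF (hF : HasTwoJetAt v F F' F'' p) :
    HasTwoJetAt v (metricF F) (exp (2 * F p) * (2 * F'))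
      (exp (2 * F p) * (2 * F'' + 4 * F' ^ 2)) p :=
  (hF.const_mul 2).exp.congr_derivs rfl (by ring)

theorem hasTwoJetAt_metricK (hF : HasTwoJetAt v F F' F'' p) (hA : HasTwoJetAt v A A' A'' p) :
    HasTwoJetAt v (metricK F A) (-(exp (2 * F p) * (2 * A p * F' + A')))
      (-(exp (2 * F p) * (A p * (2 * F'' + 4 * F' ^ 2) + 4 * F' * A' + A''))) p :=
  ((hasTwoJetAt_metricF hF).neg.mul hA).congr_derivs (by rw [metricF]; ring)
    (by rw [metricF]; ring)

theorem hasTwoJetAt_metricL (hF : HasTwoJetAt v F F' F'' p) (hA : HasTwoJetAt v A A' A'' p)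
    (hW : HasTwoJetAt v W W' W'' p) :
    HasTwoJetAt v (metricL F A W)
      (-(exp (2 * F p) * (2 * A p ^ 2 * F' + 2 * A p * A'))
        + exp (-(2 * F p)) * (2 * W p * W' - 2 * W p ^ 2 * F'))
      (-(exp (2 * F p) * (A p ^ 2 * (2 * F'' + 4 * F' ^ 2) + 8 * A p * F' * A'
          + 2 * A' ^ 2 + 2 * A p * A''))
        + exp (-(2 * F p)) * (W p ^ 2 * (4 * F' ^ 2 - 2 * F'') - 8 * W p * F' * W'
          + 2 * W' ^ 2 + 2 * W p * W'')) p :=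
  (((hasTwoJetAt_metricF hF).neg.mul hA.sq).add
    ((hF.const_mul 2).neg.exp.mul hW.sq)).congr_derivs (by rw [metricF]; ring)
    (by rw [metricF]; ring)

variable (v) (hF : ContDiffAt ℝ 2 F p) (hA : ContDiffAt ℝ 2 A p) (hW : ContDiffAt ℝ 2 W p)
include hF hA hW

theorem killingSigma_eq :
    killingSigma v F A W p = exp (2 * F p) ^ 2 * dirDeriv v A p ^ 2
      + 4 * W p * (dirDeriv v W p * dirDeriv v F p) - 4 * W p ^ 2 * dirDeriv v F p ^ 2 := by
  have jetF := HasTwoJetAt.of_contDiffAt v hF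
  have jetA := HasTwoJetAt.of_contDiffAt v hA
  have jetW := HasTwoJetAt.of_contDiffAt v hW
  rw [killingSigma, (hasTwoJetAt_metricF jetF).fst, (hasTwoJetAt_metricK jetF jetA).fst,
    (hasTwoJetAt_metricL jetF jetA jetW).fst, exp_neg]
  field_simp
  ring

variable (hWp : W p ≠ 0)
include hWp

theorem ricciTerm_metricF :
    ricciTerm v F A W (metricF F) p = 2 * exp (2 * F p) / W p * potentialTerm v F A W p := by
  have jetf := hasTwoJetAt_metricF (.of_contDiffAt v hF)
  rw [ricciTerm, killingSigma_eq v hF hA hW,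
    jetf.dirDeriv_fst_div (.of_contDiffAt v hW) hWp, potentialTerm, metricF,
    exp_four_mul]
  field_simp
  ring

theorem ricciTerm_metricK :
    ricciTerm v F A W (metricK F A) p
      = -(exp (2 * F p) / W p
          * (2 * A p * potentialTerm v F A W p + twistTerm v F A W p)) := by
  have jetk := hasTwoJetAt_metricK (.of_contDiffAt v hF) (.of_contDiffAt v hA)
  rw [ricciTerm, killingSigma_eq v hF hA hW,
    jetk.dirDeriv_fst_div (.of_contDiffAt v hW) hWp, potentialTerm, twistTerm, metricK,
    exp_four_mul]
  field_simp
  ring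

theorem ricciTerm_metricL :
    ricciTerm v F A W (metricL F A W) p
      = -(2 / W p * ((exp (2 * F p) * A p ^ 2 + exp (-(2 * F p)) * W p ^ 2)
            * potentialTerm v F A W p
          + exp (2 * F p) * A p * twistTerm v F A W p
          - exp (-(2 * F p)) * W p * dirDeriv v (dirDeriv v W) p)) := by
  have jetW := HasTwoJetAt.of_contDiffAt v hW
  have jetl := hasTwoJetAt_metricL (.of_contDiffAt v hF) (.of_contDiffAt v hA) jetW
  rw [ricciTerm, killingSigma_eq v hF hA hW, jetl.dirDeriv_fst_div jetW hWp, potentialTerm,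
    twistTerm, metricL, exp_four_mul, exp_neg]
  field_simp
  ring

end KillingBlock

/-- The Einstein equations at a point, for directions `b i` replacing the two coordinate directions.
Here `M` is `e^m`, `w` is `(ε + P) e^{-2G}` and `ω` is `Ω / c`. -/
theorem stmt_1_general {ι : Type*} [Fintype ι] (b : ι → V) {p : V} {F A W : V → ℝ}
    (hF : ContDiffAt ℝ 2 F p) (hA : ContDiffAt ℝ 2 A p) (hW : ContDiffAt ℝ 2 W p) (hWp : W p ≠ 0)
    {κ M w P ω R00 R02 R22 : ℝ} (hM : M ≠ 0)
    (hR00 : 2 * M / W p * R00 = ∑ i, ricciTerm (b i) F A W (metricF F) p)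
    (hR02 : -(2 * M / W p * R02) = ∑ i, ricciTerm (b i) F A W (metricK F A) p)
    (hR22 : -(2 * M / W p * R22) = ∑ i, ricciTerm (b i) F A W (metricL F A W) p)
    (hN9a : ∑ i, potentialTerm (b i) F A W p
      = κ / 2 * M * (w * (exp (2 * F p) * (1 + ω * A p) ^ 2
          + exp (-(2 * F p)) * ω ^ 2 * W p ^ 2) + 2 * P))
    (hN9b : ∑ i, twistTerm (b i) F A W p
      = -(2 * κ) * M * w * (exp (-(2 * F p)) * ω * W p ^ 2 * (1 + ω * A p)))
    (hN9c : ∑ i, dirDeriv (b i) (dirDeriv (b i) W) p = 2 * κ * M * P * W p) :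
    R00 = κ * (1 / 2 * w * ((metricF F p - ω * metricK F A p) ^ 2 + ω ^ 2 * W p ^ 2)
      + P * metricF F p) ∧
    R02 = κ * (1 / 2 * w * (-(metricK F A p * metricF F p)
        - 2 * ω * metricF F p * metricL F A W p + ω ^ 2 * metricK F A p * metricL F A W p)
      - P * metricK F A p) ∧
    R22 = κ * (1 / 2 * w * (W p ^ 2 + (metricK F A p + ω * metricL F A W p) ^ 2)
      - P * metricL F A W p) := by
  have ricci00 : M * R00 = exp (2 * F p) * ∑ i, potentialTerm (b i) F A W p := by
    simp only [ricciTerm_metricF _ hF hA hW hWp, ← Finset.mul_sum] at hR00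
    field_simp at hR00
    exact hR00
  have ricci02 : M * R02 = exp (2 * F p) * (A p * ∑ i, potentialTerm (b i) F A W p
      + (∑ i, twistTerm (b i) F A W p) / 2) := by
    simp only [ricciTerm_metricK _ hF hA hW hWp, Finset.sum_neg_distrib, ← Finset.mul_sum,
      Finset.sum_add_distrib] at hR02
    field_simp at hR02 ⊢
    linear_combination -hR02
  have ricci22 : M * R22 = (exp (2 * F p) * A p ^ 2 + exp (-(2 * F p)) * W p ^ 2)
        * ∑ i, potentialTerm (b i) F A W p
      + exp (2 * F p) * A p * ∑ i, twistTerm (b i) F A W p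
      - exp (-(2 * F p)) * W p * ∑ i, dirDeriv (b i) (dirDeriv (b i) W) p := by
    simp only [ricciTerm_metricL _ hF hA hW hWp, Finset.sum_neg_distrib, ← Finset.mul_sum,
      Finset.sum_add_distrib, Finset.sum_sub_distrib] at hR22
    field_simp at hR22 ⊢
    linear_combination -hR22
  refine ⟨mul_left_cancel₀ hM (ricci00.trans ?_), mul_left_cancel₀ hM (ricci02.trans ?_),
    mul_left_cancel₀ hM (ricci22.trans ?_)⟩ <;>
  · simp only [hN9a, hN9b, hN9c, metricF, metricK, metricL, exp_neg]
    field_simp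
    ring

theorem d1_eq_dirDeriv : d1 = dirDeriv (1, 0) := rfl

theorem d3_eq_dirDeriv : d3 = dirDeriv (0, 1) := rfl

/-- **(N.9a)(N.9b)(N.9c) ⟹ (36a)(36b)(36c)** (Proposition 2 of the paper). -/
theorem stmt_1
    (c κ : ℝ) (hc : 0 < c) (hκ : 0 < κ)
    (O : Set (ℝ × ℝ)) (hO : IsOpen O) (hOw : ∀ p ∈ O, 0 < p.1)
    (F A Pt K ρ P Ω : ℝ × ℝ → ℝ)
    (hF : ContDiffOn ℝ 2 F O) (hA : ContDiffOn ℝ 2 A O)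
    (hPt : ContDiffOn ℝ 2 Pt O) (hK : ContDiffOn ℝ 2 K O)
    (hPtpos : ∀ p ∈ O, 0 < Pt p)
    (hρc : ContinuousOn ρ O) (hPc : ContinuousOn P O) (hΩc : ContinuousOn Ω O)
    (hρ0 : ∀ p ∈ O, 0 ≤ ρ p) (hP0 : ∀ p ∈ O, 0 ≤ P p)
    (ε f k m l E Sg : ℝ × ℝ → ℝ)
    (hε : ε = fun p => c ^ 2 * ρ p)
    (hf : f = fun p => exp (2 * F p))
    (hk : k = fun p => -exp (2 * F p) * A p)
    (hm : m = fun p => 2 * (-F p + K p))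
    (hl : l = fun p => -exp (2 * F p) * (A p) ^ 2 + exp (-(2 * F p)) * (Pt p) ^ 2)
    (hE : E = fun p => exp (2 * F p) * (1 + Ω p * A p / c) ^ 2
      - exp (-(2 * F p)) * (Ω p ^ 2 / c ^ 2) * (Pt p) ^ 2)
    (hEpos : ∀ p ∈ O, 0 < E p)
    (hSg : Sg = fun p => d1 f p * d1 l p + d3 f p * d3 l p + (d1 k p) ^ 2 + (d3 k p) ^ 2)
    (R00 R02 R22 : ℝ × ℝ → ℝ)
    (hR00 : ∀ p ∈ O, (2 * exp (m p) / Pt p) * R00 p =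
      d1 (fun q => d1 f q / Pt q) p + d3 (fun q => d3 f q / Pt q) p + f p * Sg p / (Pt p) ^ 3)
    (hR02 : ∀ p ∈ O, -((2 * exp (m p) / Pt p) * R02 p) =
      d1 (fun q => d1 k q / Pt q) p + d3 (fun q => d3 k q / Pt q) p + k p * Sg p / (Pt p) ^ 3)
    (hR22 : ∀ p ∈ O, -((2 * exp (m p) / Pt p) * R22 p) =
      d1 (fun q => d1 l q / Pt q) p + d3 (fun q => d3 l q / Pt q) p + l p * Sg p / (Pt p) ^ 3)
    (S00 S02 S22 : ℝ × ℝ → ℝ)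
    (hS00 : S00 = fun p => (1/2) * (ε p + P p) * (E p)⁻¹
      * ((f p - (Ω p / c) * k p) ^ 2 + (Ω p ^ 2 / c ^ 2) * (Pt p) ^ 2) + P p * f p)
    (hS02 : S02 = fun p => (1/2) * (ε p + P p) * (E p)⁻¹
      * (-(k p * f p) - 2 * (Ω p / c) * f p * l p + (Ω p ^ 2 / c ^ 2) * k p * l p) - P p * k p)
    (hS22 : S22 = fun p => (1/2) * (ε p + P p) * (E p)⁻¹
      * ((Pt p) ^ 2 + (k p + (Ω p / c) * l p) ^ 2) - P p * l p)
    (hN9a : (∀ p ∈ O,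
      d1 (d1 F) p + d3 (d3 F) p
        + (1 / Pt p) * (d1 Pt p * d1 F p + d3 Pt p * d3 F p)
        + (exp (4 * F p) / (2 * (Pt p) ^ 2)) * ((d1 A p) ^ 2 + (d3 A p) ^ 2)
      = (κ / 2) * exp (2 * (-F p + K p)) *
          ((ε p + P p) * (exp (2 * F p) * (1 + Ω p * A p / c) ^ 2
            + exp (-(2 * F p)) * (Ω p ^ 2 / c ^ 2) * (Pt p) ^ 2) / E p + 2 * P p)))
    (hN9b : (∀ p ∈ O,
      d1 (d1 A) p + d3 (d3 A) p
        - (1 / Pt p) * (d1 Pt p * d1 A p + d3 Pt p * d3 A p)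
        + 4 * (d1 F p * d1 A p + d3 F p * d3 A p)
      = -(2 * κ) * exp (2 * (-F p + K p)) * (ε p + P p) *
          (exp (-(2 * F p)) * (Ω p / c) * (Pt p) ^ 2 * (1 + Ω p * A p / c)) / E p))
    (hN9c : (∀ p ∈ O,
      d1 (d1 Pt) p + d3 (d3 Pt) p
      = 2 * κ * exp (2 * (-F p + K p)) * P p * Pt p)) :
    (∀ p ∈ O, R00 p = κ * S00 p) ∧
    (∀ p ∈ O, R02 p = κ * S02 p) ∧
    (∀ p ∈ O, R22 p = κ * S22 p) := by
  obtain rfl : f = metricF F := hf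
  obtain rfl : k = metricK F A := hk
  obtain rfl : l = metricL F A Pt := hl
  subst hε hm hSg hS00 hS02 hS22
  rw [← forall₂_and, ← forall₂_and]
  intro p hp
  have smooth {g : ℝ × ℝ → ℝ} (hg : ContDiffOn ℝ 2 g O) : ContDiffAt ℝ 2 g p :=
    hg.contDiffAt (hO.mem_nhds hp)
  have general := stmt_1_general ![(1, 0), (0, 1)] (smooth hF) (smooth hA) (smooth hPt)
    (hPtpos p hp).ne' (κ := κ) (w := (c ^ 2 * ρ p + P p) / E p) (P := P p) (ω := Ω p / c)
    (R00 := R00 p) (R02 := R02 p) (R22 := R22 p) (exp_ne_zero (2 * (-F p + K p)))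
  simp only [Fin.sum_univ_two, Matrix.cons_val_zero, Matrix.cons_val_one, ricciTerm, potentialTerm,
    twistTerm, killingSigma, ← d1_eq_dirDeriv, ← d3_eq_dirDeriv] at general
  obtain ⟨h00, h02, h22⟩ := general (by linear_combination hR00 p hp)
    (by linear_combination hR02 p hp) (by linear_combination hR22 p hp)
    (by linear_combination hN9a p hp) (by linear_combination hN9b p hp) (hN9c p hp)
  exact ⟨by linear_combination h00, by linear_combination h02, by linear_combination h22⟩
end

section
/- Under the Setup, suppose additionally: Π is C³ and K is C² on O; (C): (∂₁Π)² + (∂₃Π)² ≠ 0 everywhere on O; O = O₁ ∪ O₂ where O₁, O₂ are open, Ω is constant on O₁, and ρ = P = 0 on O₂; P is C¹ on O₁; and on O₁ the Euler relation ∂ⱼP = (ε+P)·(1/(2E))·(−∂ⱼf + 2(Ω/c)∂ⱼk + (Ω²/c²)∂ⱼl) holds for j = 1,3. If equations (N.9a), (N.9b), (N.9c), (Ya), (Yb) hold on O, then equations (36d), (36e), (36f) hold on O. -/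
open Real

/-!
The left-hand sides of the quadratures (Ya), (Yb) are the components of the traceless symmetric
tensor built from `∇Π` and `∇K`. Its divergence contains the second derivatives of `K` and `Π` only
through `ΔK` and `ΔΠ`; contracted with a vector `v` it is `ΔΠ ∂ᵥK + ∂ᵥΠ ΔK`. On the right-hand
sides, the divergence turns the Hessian of `Π` into `½ ∂ᵥ(ΔΠ)` and the remaining terms into the
operators of (N.9a) and (N.9b). Differentiating (N.9c) produces `∂ᵥP`, and once this is replaced
using the Euler relation every remaining term is proportional to `∂ᵥΠ`. By (C) some `∂ᵥΠ` is
nonzero and can be cancelled, which leaves an equation for `ΔK`. Modulo (Ya) the components `R₁₁`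
and `R₃₃` coincide and depend on the second derivatives of `F`, `Π`, `K` only through `ΔF`, `ΔΠ`,
`ΔK`, while (Yb) says that `R₁₃` vanishes.
-/

section PartialDerivatives

variable {u w : ℝ × ℝ → ℝ} {p : ℝ × ℝ}

lemma fderiv_eq_d1_add_d3 (u : ℝ × ℝ → ℝ) (p v : ℝ × ℝ) :
    fderiv ℝ u p v = v.1 * d1 u p + v.2 * d3 u p := by
  have hv : v = v.1 • ((1, 0) : ℝ × ℝ) + v.2 • ((0, 1) : ℝ × ℝ) := by ext <;> simp
  conv_lhs => rw [hv]
  simp only [map_add, map_smul, smul_eq_mul, d1, d3]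

lemma d1_add (hu : DifferentiableAt ℝ u p) (hw : DifferentiableAt ℝ w p) :
    d1 (fun q => u q + w q) p = d1 u p + d1 w p := by
  simp only [d1, fderiv_fun_add hu hw, add_apply]

lemma d3_add (hu : DifferentiableAt ℝ u p) (hw : DifferentiableAt ℝ w p) :
    d3 (fun q => u q + w q) p = d3 u p + d3 w p := by
  simp only [d3, fderiv_fun_add hu hw, add_apply]

lemma d1_sub (hu : DifferentiableAt ℝ u p) (hw : DifferentiableAt ℝ w p) :
    d1 (fun q => u q - w q) p = d1 u p - d1 w p := by
  simp only [d1, fderiv_fun_sub hu hw, sub_apply]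

lemma d3_sub (hu : DifferentiableAt ℝ u p) (hw : DifferentiableAt ℝ w p) :
    d3 (fun q => u q - w q) p = d3 u p - d3 w p := by
  simp only [d3, fderiv_fun_sub hu hw, sub_apply]

lemma d1_mul (hu : DifferentiableAt ℝ u p) (hw : DifferentiableAt ℝ w p) :
    d1 (fun q => u q * w q) p = d1 u p * w p + u p * d1 w p := by
  simp only [d1, fderiv_fun_mul hu hw, add_apply, smul_apply, smul_eq_mul]
  ring

lemma d3_mul (hu : DifferentiableAt ℝ u p) (hw : DifferentiableAt ℝ w p) :
    d3 (fun q => u q * w q) p = d3 u p * w p + u p * d3 w p := by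
  simp only [d3, fderiv_fun_mul hu hw, add_apply, smul_apply, smul_eq_mul]
  ring

lemma contDiffAt_d1 {m n : WithTop ℕ∞} (hu : ContDiffAt ℝ n u p) (hmn : m + 1 ≤ n) :
    ContDiffAt ℝ m (d1 u) p :=
  (hu.fderiv_right hmn).clm_apply contDiffAt_const

lemma contDiffAt_d3 {m n : WithTop ℕ∞} (hu : ContDiffAt ℝ n u p) (hmn : m + 1 ≤ n) :
    ContDiffAt ℝ m (d3 u) p :=
  (hu.fderiv_right hmn).clm_apply contDiffAt_const

lemma differentiableAt_d1 (hu : ContDiffAt ℝ 2 u p) : DifferentiableAt ℝ (d1 u) p :=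
  (contDiffAt_d1 (m := 1) hu (by norm_num)).differentiableAt one_ne_zero

lemma differentiableAt_d3 (hu : ContDiffAt ℝ 2 u p) : DifferentiableAt ℝ (d3 u) p :=
  (contDiffAt_d3 (m := 1) hu (by norm_num)).differentiableAt one_ne_zero

lemma d3_d1_comm (hu : ContDiffAt ℝ 2 u p) : d3 (d1 u) p = d1 (d3 u) p := by
  have hd : DifferentiableAt ℝ (fderiv ℝ u) p :=
    (hu.fderiv_right (m := 1) (by norm_num)).differentiableAt one_ne_zero
  have second (a b : ℝ × ℝ) :
      fderiv ℝ (fun q => fderiv ℝ u q a) p b = fderiv ℝ (fderiv ℝ u) p b a := by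
    simp [fderiv_clm_apply hd (differentiableAt_const a)]
  calc d3 (d1 u) p = fderiv ℝ (fderiv ℝ u) p (0, 1) (1, 0) := second _ _
    _ = fderiv ℝ (fderiv ℝ u) p (1, 0) (0, 1) := hu.isSymmSndFDerivAt (by simp) _ _
    _ = d1 (d3 u) p := (second _ _).symm

/-- The flat Laplacian of the meridian half-plane. -/
noncomputable def planeLaplacian (u : ℝ × ℝ → ℝ) (p : ℝ × ℝ) : ℝ :=
  d1 (d1 u) p + d3 (d3 u) p

/-- The Euclidean inner product of two gradients. -/
noncomputable def gradInner (u w : ℝ × ℝ → ℝ) (p : ℝ × ℝ) : ℝ :=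
  d1 u p * d1 w p + d3 u p * d3 w p

end PartialDerivatives

section TracelessTensors

/-- The diagonal component `T₁₁ = -T₃₃` of the traceless symmetric part of `2 ∇u ⊗ ∇w`. -/
noncomputable def stress11 (u w : ℝ × ℝ → ℝ) (p : ℝ × ℝ) : ℝ :=
  d1 u p * d1 w p - d3 u p * d3 w p

/-- The off-diagonal component `T₁₃` of the traceless symmetric part of `2 ∇u ⊗ ∇w`. -/
noncomputable def stress13 (u w : ℝ × ℝ → ℝ) (p : ℝ × ℝ) : ℝ :=
  d3 u p * d1 w p + d1 u p * d3 w p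

/-- The divergence, contracted with the vector `v`, of the traceless symmetric tensor field with
components `T₁₁ = -T₃₃ = a` and `T₁₃ = b`. -/
noncomputable def tracelessDiv (a b : ℝ × ℝ → ℝ) (p v : ℝ × ℝ) : ℝ :=
  v.1 * (d1 a p + d3 b p) + v.2 * (d1 b p - d3 a p)

variable {a a' b b' g u w : ℝ × ℝ → ℝ} {p : ℝ × ℝ}

lemma tracelessDiv_congr (ha : a =ᶠ[nhds p] a') (hb : b =ᶠ[nhds p] b') (v : ℝ × ℝ) :
    tracelessDiv a b p v = tracelessDiv a' b' p v := by
  simp only [tracelessDiv, d1, d3, ha.fderiv_eq, hb.fderiv_eq]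

lemma tracelessDiv_add (ha : DifferentiableAt ℝ a p) (hb : DifferentiableAt ℝ b p)
    (ha' : DifferentiableAt ℝ a' p) (hb' : DifferentiableAt ℝ b' p) (v : ℝ × ℝ) :
    tracelessDiv (fun q => a q + a' q) (fun q => b q + b' q) p v =
      tracelessDiv a b p v + tracelessDiv a' b' p v := by
  simp only [tracelessDiv, d1_add ha ha', d3_add ha ha', d1_add hb hb', d3_add hb hb']
  ring

lemma tracelessDiv_sub (ha : DifferentiableAt ℝ a p) (hb : DifferentiableAt ℝ b p)
    (ha' : DifferentiableAt ℝ a' p) (hb' : DifferentiableAt ℝ b' p) (v : ℝ × ℝ) :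
    tracelessDiv (fun q => a q - a' q) (fun q => b q - b' q) p v =
      tracelessDiv a b p v - tracelessDiv a' b' p v := by
  simp only [tracelessDiv, d1_sub ha ha', d3_sub ha ha', d1_sub hb hb', d3_sub hb hb']
  ring

lemma tracelessDiv_mul (hg : DifferentiableAt ℝ g p) (ha : DifferentiableAt ℝ a p)
    (hb : DifferentiableAt ℝ b p) (v : ℝ × ℝ) :
    tracelessDiv (fun q => g q * a q) (fun q => g q * b q) p v =
      g p * tracelessDiv a b p v
        + (v.1 * (d1 g p * a p + d3 g p * b p) + v.2 * (d1 g p * b p - d3 g p * a p)) := by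
  simp only [tracelessDiv, d1_mul hg ha, d3_mul hg ha, d1_mul hg hb, d3_mul hg hb]
  ring

lemma differentiableAt_stress11 (hu : ContDiffAt ℝ 2 u p) (hw : ContDiffAt ℝ 2 w p) :
    DifferentiableAt ℝ (stress11 u w) p :=
  ((differentiableAt_d1 hu).mul (differentiableAt_d1 hw)).sub
    ((differentiableAt_d3 hu).mul (differentiableAt_d3 hw))

lemma differentiableAt_stress13 (hu : ContDiffAt ℝ 2 u p) (hw : ContDiffAt ℝ 2 w p) :
    DifferentiableAt ℝ (stress13 u w) p :=
  ((differentiableAt_d3 hu).mul (differentiableAt_d1 hw)).add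
    ((differentiableAt_d1 hu).mul (differentiableAt_d3 hw))

lemma tracelessDiv_stress (hu : ContDiffAt ℝ 2 u p) (hw : ContDiffAt ℝ 2 w p) (v : ℝ × ℝ) :
    tracelessDiv (stress11 u w) (stress13 u w) p v =
      planeLaplacian u p * fderiv ℝ w p v + fderiv ℝ u p v * planeLaplacian w p := by
  have hu1 := differentiableAt_d1 hu
  have hu3 := differentiableAt_d3 hu
  have hw1 := differentiableAt_d1 hw
  have hw3 := differentiableAt_d3 hw
  unfold tracelessDiv stress11 stress13 planeLaplacian
  have h11 := hu1.fun_mul hw1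
  have h33 := hu3.fun_mul hw3
  have h31 := hu3.fun_mul hw1
  have h13 := hu1.fun_mul hw3
  rw [d1_sub h11 h33, d3_sub h11 h33, d1_add h31 h13, d3_add h31 h13]
  simp only [d1_mul, d3_mul, hu1, hu3, hw1, hw3, d3_d1_comm hu, d3_d1_comm hw,
    fderiv_eq_d1_add_d3 _ p v]
  ring

lemma tracelessDiv_mul_stress_self (hg : DifferentiableAt ℝ g p) (hu : ContDiffAt ℝ 2 u p)
    (v : ℝ × ℝ) :
    tracelessDiv (fun q => g q * stress11 u u q) (fun q => g q * stress13 u u q) p v =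
      2 * (g p * planeLaplacian u p + gradInner g u p) * fderiv ℝ u p v
        - gradInner u u p * fderiv ℝ g p v := by
  rw [tracelessDiv_mul hg (differentiableAt_stress11 hu hu) (differentiableAt_stress13 hu hu),
    tracelessDiv_stress hu hu]
  simp only [stress11, stress13, gradInner, fderiv_eq_d1_add_d3 _ p v]
  ring

lemma tracelessDiv_hessian (hu : ContDiffAt ℝ 3 u p) (v : ℝ × ℝ) :
    tracelessDiv (fun q => 1 / 2 * (d1 (d1 u) q - d3 (d3 u) q)) (d1 (d3 u)) p v =
      1 / 2 * fderiv ℝ (planeLaplacian u) p v := by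
  have hu1 : ContDiffAt ℝ 2 (d1 u) p := contDiffAt_d1 hu (by norm_num)
  have hu3 : ContDiffAt ℝ 2 (d3 u) p := contDiffAt_d3 hu (by norm_num)
  have hu11 := differentiableAt_d1 hu1
  have hu33 := differentiableAt_d3 hu3
  have comm : d3 (d1 u) =ᶠ[nhds p] d1 (d3 u) :=
    ((hu.of_le (by norm_num)).eventually (by simp)).mono fun q hq => d3_d1_comm hq
  have comm1 : d1 (d1 (d3 u)) p = d3 (d1 (d1 u)) p := by
    rw [d3_d1_comm hu1, d1, d1, comm.fderiv_eq]
  have half : DifferentiableAt ℝ (fun _ : ℝ × ℝ => (1 / 2 : ℝ)) p := differentiableAt_const _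
  unfold tracelessDiv
  rw [d1_mul half (hu11.fun_sub hu33), d3_mul half (hu11.fun_sub hu33), d1_sub hu11 hu33,
    d3_sub hu11 hu33, d3_d1_comm hu3, comm1, fderiv_eq_d1_add_d3]
  unfold planeLaplacian
  rw [d1_add hu11 hu33, d3_add hu11 hu33]
  simp only [d1, d3, fderiv_const_apply, zero_apply]
  ring

end TracelessTensors

section Quadratures

variable {F A Pt K g : ℝ × ℝ → ℝ} {p : ℝ × ℝ}

lemma quadrature_divergence (hF : ContDiffAt ℝ 2 F p) (hA : ContDiffAt ℝ 2 A p)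
    (hPt : ContDiffAt ℝ 3 Pt p) (hK : ContDiffAt ℝ 2 K p) (hg : DifferentiableAt ℝ g p)
    (h11 : ∀ᶠ q in nhds p, stress11 Pt K q = 1 / 2 * (d1 (d1 Pt) q - d3 (d3 Pt) q)
      + Pt q * stress11 F F q - g q * stress11 A A q)
    (h13 : ∀ᶠ q in nhds p, stress13 Pt K q = d1 (d3 Pt) q
      + Pt q * stress13 F F q - g q * stress13 A A q) (v : ℝ × ℝ) :
    planeLaplacian Pt p * fderiv ℝ K p v + fderiv ℝ Pt p v * planeLaplacian K p =
      1 / 2 * fderiv ℝ (planeLaplacian Pt) p v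
        + (2 * (Pt p * planeLaplacian F p + gradInner Pt F p) * fderiv ℝ F p v
          - gradInner F F p * fderiv ℝ Pt p v)
        - (2 * (g p * planeLaplacian A p + gradInner g A p) * fderiv ℝ A p v
          - gradInner A A p * fderiv ℝ g p v) := by
  have hPt2 : ContDiffAt ℝ 2 Pt p := hPt.of_le (by norm_num)
  have dPt : DifferentiableAt ℝ Pt p := hPt.differentiableAt (by norm_num)
  have hess11 : DifferentiableAt ℝ (fun q => 1 / 2 * (d1 (d1 Pt) q - d3 (d3 Pt) q)) p :=
    ((differentiableAt_d1 (contDiffAt_d1 hPt (by norm_num))).fun_sub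
      (differentiableAt_d3 (contDiffAt_d3 hPt (by norm_num)))).const_mul _
  have hess13 : DifferentiableAt ℝ (d1 (d3 Pt)) p :=
    differentiableAt_d1 (contDiffAt_d3 hPt (by norm_num))
  have F11 := dPt.fun_mul (differentiableAt_stress11 hF hF)
  have F13 := dPt.fun_mul (differentiableAt_stress13 hF hF)
  have A11 := hg.fun_mul (differentiableAt_stress11 hA hA)
  have A13 := hg.fun_mul (differentiableAt_stress13 hA hA)
  rw [← tracelessDiv_stress hPt2 hK v, tracelessDiv_congr h11 h13,
    tracelessDiv_sub (hess11.fun_add F11) (hess13.fun_add F13) A11 A13,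
    tracelessDiv_add hess11 hess13 F11 F13, tracelessDiv_hessian hPt,
    tracelessDiv_mul_stress_self dPt hF, tracelessDiv_mul_stress_self hg hA]

/-- The coefficient `e^{4F} / (4Π)` of the quadratic terms in `∇A` in the quadratures for `K`. -/
noncomputable def twistWeight (F Pt : ℝ × ℝ → ℝ) (p : ℝ × ℝ) : ℝ := exp (4 * F p) / (4 * Pt p)

lemma hasFDerivAt_twistWeight (hF : DifferentiableAt ℝ F p) (hPt : DifferentiableAt ℝ Pt p)
    (hPt0 : Pt p ≠ 0) :
    HasFDerivAt (twistWeight F Pt)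
      (twistWeight F Pt p • ((4 : ℝ) • fderiv ℝ F p - (Pt p)⁻¹ • fderiv ℝ Pt p)) p := by
  have hexp := (hF.hasFDerivAt.const_mul 4).exp
  have hinv := (hasDerivAt_inv (mul_ne_zero four_ne_zero hPt0)).comp_hasFDerivAt p
    (hPt.hasFDerivAt.const_mul 4)
  refine (hexp.fun_mul hinv).congr_fderiv (ContinuousLinearMap.ext fun v => ?_)
  simp only [neg_smul, smul_neg, Function.comp_apply, mul_inv_rev, add_apply, neg_apply,
    smul_apply, smul_eq_mul, twistWeight, sub_apply]
  field_simp
  ring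

lemma fderiv_twistWeight (hF : DifferentiableAt ℝ F p) (hPt : DifferentiableAt ℝ Pt p)
    (hPt0 : Pt p ≠ 0) (v : ℝ × ℝ) :
    fderiv ℝ (twistWeight F Pt) p v =
      twistWeight F Pt p * (4 * fderiv ℝ F p v - fderiv ℝ Pt p v / Pt p) := by
  simp [(hasFDerivAt_twistWeight hF hPt hPt0).fderiv, div_eq_inv_mul]

lemma gradInner_twistWeight (hF : DifferentiableAt ℝ F p) (hPt : DifferentiableAt ℝ Pt p)
    (hPt0 : Pt p ≠ 0) (u : ℝ × ℝ → ℝ) :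
    gradInner (twistWeight F Pt) u p =
      twistWeight F Pt p * (4 * gradInner F u p - gradInner Pt u p / Pt p) := by
  unfold gradInner
  rw [show d1 (twistWeight F Pt) p = _ from fderiv_twistWeight hF hPt hPt0 (1, 0),
    show d3 (twistWeight F Pt) p = _ from fderiv_twistWeight hF hPt hPt0 (0, 1)]
  simp only [d1, d3]
  ring

/-- The operator acting on `F` in the reduced equation (N.9a). -/
noncomputable def twistOperatorF (F A Pt : ℝ × ℝ → ℝ) (p : ℝ × ℝ) : ℝ :=
  planeLaplacian F p + 1 / Pt p * gradInner Pt F p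
    + exp (4 * F p) / (2 * Pt p ^ 2) * (d1 A p ^ 2 + d3 A p ^ 2)

/-- The operator acting on `A` in the reduced equation (N.9b). -/
noncomputable def twistOperatorA (F A Pt : ℝ × ℝ → ℝ) (p : ℝ × ℝ) : ℝ :=
  planeLaplacian A p - 1 / Pt p * gradInner Pt A p + 4 * gradInner F A p

/-- The second-order operator on `K` which the two first-order quadratures determine. -/
noncomputable def quadratureOperatorK (F A Pt K : ℝ × ℝ → ℝ) (p : ℝ × ℝ) : ℝ :=
  planeLaplacian K p + (d1 F p ^ 2 + d3 F p ^ 2)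
    + exp (4 * F p) / (4 * Pt p ^ 2) * (d1 A p ^ 2 + d3 A p ^ 2)

lemma quadrature_divergence_eq_operators (hF : ContDiffAt ℝ 2 F p)
    (hA : ContDiffAt ℝ 2 A p) (hPt : ContDiffAt ℝ 3 Pt p) (hK : ContDiffAt ℝ 2 K p)
    (hPt0 : Pt p ≠ 0)
    (h11 : ∀ᶠ q in nhds p, stress11 Pt K q = 1 / 2 * (d1 (d1 Pt) q - d3 (d3 Pt) q)
      + Pt q * stress11 F F q - twistWeight F Pt q * stress11 A A q)
    (h13 : ∀ᶠ q in nhds p, stress13 Pt K q = d1 (d3 Pt) q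
      + Pt q * stress13 F F q - twistWeight F Pt q * stress13 A A q) (v : ℝ × ℝ) :
    planeLaplacian Pt p * fderiv ℝ K p v
        + fderiv ℝ Pt p v * quadratureOperatorK F A Pt K p =
      1 / 2 * fderiv ℝ (planeLaplacian Pt) p v
        + 2 * Pt p * twistOperatorF F A Pt p * fderiv ℝ F p v
        - exp (4 * F p) / (2 * Pt p) * twistOperatorA F A Pt p * fderiv ℝ A p v := by
  have dF : DifferentiableAt ℝ F p := hF.differentiableAt (by norm_num)
  have dPt : DifferentiableAt ℝ Pt p := hPt.differentiableAt (by norm_num)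
  have hdiv := quadrature_divergence hF hA hPt hK
    (hasFDerivAt_twistWeight dF dPt hPt0).differentiableAt h11 h13 v
  rw [fderiv_twistWeight dF dPt hPt0, gradInner_twistWeight dF dPt hPt0, twistWeight] at hdiv
  unfold quadratureOperatorK twistOperatorF twistOperatorA
  unfold gradInner at hdiv ⊢
  linear_combination (norm := (field_simp; ring)) hdiv

end Quadratures

section GramCoefficients

variable {F A Pt : ℝ × ℝ → ℝ} {p : ℝ × ℝ}

/-- The coefficient `f = e^{2F}` of the rotationally symmetric metric, as a function of `F`. -/
noncomputable def gramF (F : ℝ × ℝ → ℝ) (p : ℝ × ℝ) : ℝ := exp (2 * F p)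

/-- The mixed coefficient `k = -e^{2F} A`. -/
noncomputable def gramK (F A : ℝ × ℝ → ℝ) (p : ℝ × ℝ) : ℝ := -exp (2 * F p) * A p

/-- The azimuthal coefficient `l = -e^{2F} A² + e^{-2F} Π²`, so that `Π² = f l + k²`. -/
noncomputable def gramL (F A Pt : ℝ × ℝ → ℝ) (p : ℝ × ℝ) : ℝ :=
  -exp (2 * F p) * A p ^ 2 + exp (-(2 * F p)) * Pt p ^ 2

lemma fderiv_gramF (hF : DifferentiableAt ℝ F p) (v : ℝ × ℝ) :
    fderiv ℝ (gramF F) p v = 2 * exp (2 * F p) * fderiv ℝ F p v := by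
  have h := congrArg (· v) (hF.hasFDerivAt.const_mul 2).exp.fderiv
  refine h.trans ?_
  simp only [smul_apply, smul_eq_mul]
  ring

lemma fderiv_gramK (hF : DifferentiableAt ℝ F p) (hA : DifferentiableAt ℝ A p) (v : ℝ × ℝ) :
    fderiv ℝ (gramK F A) p v =
      -exp (2 * F p) * (2 * A p * fderiv ℝ F p v + fderiv ℝ A p v) := by
  have h := congrArg (· v) ((hF.hasFDerivAt.const_mul 2).exp.fun_neg.fun_mul hA.hasFDerivAt).fderiv
  refine h.trans ?_
  simp only [neg_smul, smul_neg, add_apply, neg_apply, smul_apply, smul_eq_mul, neg_mul]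
  ring

lemma fderiv_gramL (hF : DifferentiableAt ℝ F p) (hA : DifferentiableAt ℝ A p)
    (hPt : DifferentiableAt ℝ Pt p) (v : ℝ × ℝ) :
    fderiv ℝ (gramL F A Pt) p v =
      -2 * exp (2 * F p) * A p * (A p * fderiv ℝ F p v + fderiv ℝ A p v)
        + 2 * exp (-(2 * F p)) * Pt p * (fderiv ℝ Pt p v - Pt p * fderiv ℝ F p v) := by
  have h := congrArg (· v) (((hF.hasFDerivAt.const_mul 2).exp.fun_neg.fun_mul
    (hA.hasFDerivAt.pow 2)).fun_add ((hF.hasFDerivAt.const_mul 2).fun_neg.exp.fun_mul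
    (hPt.hasFDerivAt.pow 2))).fderiv
  refine h.trans ?_
  simp only [Nat.add_one_sub_one, pow_one, nsmul_eq_mul, Nat.cast_ofNat, neg_smul, smul_neg,
    add_apply, neg_apply, smul_apply, smul_eq_mul, neg_mul]
  ring

lemma gram_fderiv_form (hF : DifferentiableAt ℝ F p) (hA : DifferentiableAt ℝ A p)
    (hPt : DifferentiableAt ℝ Pt p) (v w : ℝ × ℝ) :
    1 / 2 * (fderiv ℝ (gramF F) p v * fderiv ℝ (gramL F A Pt) p w
        + fderiv ℝ (gramF F) p w * fderiv ℝ (gramL F A Pt) p v)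
        + fderiv ℝ (gramK F A) p v * fderiv ℝ (gramK F A) p w =
      -4 * Pt p ^ 2 * (fderiv ℝ F p v * fderiv ℝ F p w)
        + 2 * Pt p * (fderiv ℝ F p v * fderiv ℝ Pt p w + fderiv ℝ F p w * fderiv ℝ Pt p v)
        + exp (4 * F p) * (fderiv ℝ A p v * fderiv ℝ A p w) := by
  have hinv : exp (2 * F p) * exp (-(2 * F p)) = 1 := by rw [← exp_add]; simp
  have hsq : exp (4 * F p) = exp (2 * F p) ^ 2 := by rw [← exp_nat_mul]; congr 1; push_cast; ring
  simp only [fderiv_gramF hF, fderiv_gramK hF hA, fderiv_gramL hF hA hPt, hsq]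
  linear_combination 2 * Pt p * (fderiv ℝ F p v * (fderiv ℝ Pt p w - Pt p * fderiv ℝ F p w)
    + fderiv ℝ F p w * (fderiv ℝ Pt p v - Pt p * fderiv ℝ F p v)) * hinv

end GramCoefficients

section Ricci

variable {F A Pt K : ℝ × ℝ → ℝ} {p : ℝ × ℝ}

/-- The exponent `m = 2(-F + K)` of the conformal factor of the meridian metric. -/
noncomputable def conformalExponent (F K : ℝ × ℝ → ℝ) (p : ℝ × ℝ) : ℝ := 2 * (-F p + K p)

lemma fderiv_conformalExponent (hF : DifferentiableAt ℝ F p) (hK : DifferentiableAt ℝ K p)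
    (v : ℝ × ℝ) :
    fderiv ℝ (conformalExponent F K) p v = 2 * (-fderiv ℝ F p v + fderiv ℝ K p v) := by
  have h := congrArg (· v) ((hF.hasFDerivAt.fun_neg.fun_add hK.hasFDerivAt).const_mul 2).fderiv
  refine h.trans ?_
  simp only [smul_add, smul_neg, add_apply, neg_apply, smul_apply, smul_eq_mul]
  ring

lemma planeLaplacian_conformalExponent (hF : ContDiffAt ℝ 2 F p) (hK : ContDiffAt ℝ 2 K p) :
    planeLaplacian (conformalExponent F K) p = 2 * (-planeLaplacian F p + planeLaplacian K p) := by
  have first : ∀ᶠ q in nhds p, ∀ v, fderiv ℝ (conformalExponent F K) q v =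
      2 * (-fderiv ℝ F q v + fderiv ℝ K q v) := by
    filter_upwards [hF.eventually (by simp), hK.eventually (by simp)] with q hFq hKq
    exact fderiv_conformalExponent (hFq.differentiableAt (by norm_num))
      (hKq.differentiableAt (by norm_num))
  have first1 : d1 (conformalExponent F K) =ᶠ[nhds p] conformalExponent (d1 F) (d1 K) :=
    first.mono fun q hq => hq _
  have first3 : d3 (conformalExponent F K) =ᶠ[nhds p] conformalExponent (d3 F) (d3 K) :=
    first.mono fun q hq => hq _
  have second1 : d1 (d1 (conformalExponent F K)) p = 2 * (-d1 (d1 F) p + d1 (d1 K) p) := by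
    rw [d1, first1.fderiv_eq]
    exact fderiv_conformalExponent (differentiableAt_d1 hF) (differentiableAt_d1 hK) _
  have second3 : d3 (d3 (conformalExponent F K)) p = 2 * (-d3 (d3 F) p + d3 (d3 K) p) := by
    rw [d3, first3.fderiv_eq]
    exact fderiv_conformalExponent (differentiableAt_d3 hF) (differentiableAt_d3 hK) _
  rw [planeLaplacian, second1, second3, planeLaplacian, planeLaplacian]
  ring

/-- The Ricci component `R₁₁` of the metric with potentials `F`, `A`, `Π`, `K`. -/
noncomputable def ricci11 (F A Pt K : ℝ × ℝ → ℝ) (p : ℝ × ℝ) : ℝ :=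
  1 / 2 * (-planeLaplacian (conformalExponent F K) p - 2 * d1 (d1 Pt) p / Pt p
    + stress11 (conformalExponent F K) Pt p / Pt p
    + (d1 (gramF F) p * d1 (gramL F A Pt) p + d1 (gramK F A) p ^ 2) / Pt p ^ 2)

/-- The Ricci component `R₃₃` of the metric with potentials `F`, `A`, `Π`, `K`. -/
noncomputable def ricci33 (F A Pt K : ℝ × ℝ → ℝ) (p : ℝ × ℝ) : ℝ :=
  1 / 2 * (-planeLaplacian (conformalExponent F K) p - 2 * d3 (d3 Pt) p / Pt p
    - stress11 (conformalExponent F K) Pt p / Pt p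
    + (d3 (gramF F) p * d3 (gramL F A Pt) p + d3 (gramK F A) p ^ 2) / Pt p ^ 2)

/-- The Ricci component `R₁₃` of the metric with potentials `F`, `A`, `Π`, `K`. -/
noncomputable def ricci13 (F A Pt K : ℝ × ℝ → ℝ) (p : ℝ × ℝ) : ℝ :=
  1 / 2 * (-(2 * d1 (d3 Pt) p / Pt p) + stress13 (conformalExponent F K) Pt p / Pt p
    + (1 / 2 * (d1 (gramF F) p * d3 (gramL F A Pt) p + d3 (gramF F) p * d1 (gramL F A Pt) p)
      + d1 (gramK F A) p * d3 (gramK F A) p) / Pt p ^ 2)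

lemma stress11_conformalExponent (hF : DifferentiableAt ℝ F p) (hK : DifferentiableAt ℝ K p)
    (u : ℝ × ℝ → ℝ) :
    stress11 (conformalExponent F K) u p = 2 * (-stress11 F u p + stress11 u K p) := by
  have h1 : d1 (conformalExponent F K) p = 2 * (-d1 F p + d1 K p) :=
    fderiv_conformalExponent hF hK _
  have h3 : d3 (conformalExponent F K) p = 2 * (-d3 F p + d3 K p) :=
    fderiv_conformalExponent hF hK _
  rw [stress11, h1, h3, stress11, stress11]
  ring

lemma stress13_conformalExponent (hF : DifferentiableAt ℝ F p) (hK : DifferentiableAt ℝ K p)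
    (u : ℝ × ℝ → ℝ) :
    stress13 (conformalExponent F K) u p = 2 * (-stress13 F u p + stress13 u K p) := by
  have h1 : d1 (conformalExponent F K) p = 2 * (-d1 F p + d1 K p) :=
    fderiv_conformalExponent hF hK _
  have h3 : d3 (conformalExponent F K) p = 2 * (-d3 F p + d3 K p) :=
    fderiv_conformalExponent hF hK _
  rw [stress13, h1, h3, stress13, stress13]
  ring

lemma ricci11_eq_operators (hF : ContDiffAt ℝ 2 F p) (hA : DifferentiableAt ℝ A p)
    (hPt : DifferentiableAt ℝ Pt p) (hK : ContDiffAt ℝ 2 K p) (hPt0 : Pt p ≠ 0)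
    (h11 : stress11 Pt K p = 1 / 2 * (d1 (d1 Pt) p - d3 (d3 Pt) p)
      + Pt p * stress11 F F p - twistWeight F Pt p * stress11 A A p) :
    ricci11 F A Pt K p = twistOperatorF F A Pt p - planeLaplacian Pt p / (2 * Pt p)
      - quadratureOperatorK F A Pt K p := by
  have hF' : DifferentiableAt ℝ F p := hF.differentiableAt (by norm_num)
  have form : d1 (gramF F) p * d1 (gramL F A Pt) p + d1 (gramK F A) p ^ 2
      = -4 * Pt p ^ 2 * d1 F p ^ 2 + 4 * Pt p * (d1 F p * d1 Pt p)
        + exp (4 * F p) * d1 A p ^ 2 := by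
    unfold d1
    linear_combination gram_fderiv_form hF' hA hPt (1, 0) (1, 0)
  rw [ricci11, form, planeLaplacian_conformalExponent hF hK,
    stress11_conformalExponent hF' (hK.differentiableAt (by norm_num)), h11]
  unfold twistOperatorF quadratureOperatorK planeLaplacian gradInner stress11 twistWeight
  field_simp
  ring

lemma ricci33_eq_operators (hF : ContDiffAt ℝ 2 F p) (hA : DifferentiableAt ℝ A p)
    (hPt : DifferentiableAt ℝ Pt p) (hK : ContDiffAt ℝ 2 K p) (hPt0 : Pt p ≠ 0)
    (h11 : stress11 Pt K p = 1 / 2 * (d1 (d1 Pt) p - d3 (d3 Pt) p)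
      + Pt p * stress11 F F p - twistWeight F Pt p * stress11 A A p) :
    ricci33 F A Pt K p = twistOperatorF F A Pt p - planeLaplacian Pt p / (2 * Pt p)
      - quadratureOperatorK F A Pt K p := by
  have hF' : DifferentiableAt ℝ F p := hF.differentiableAt (by norm_num)
  have form : d3 (gramF F) p * d3 (gramL F A Pt) p + d3 (gramK F A) p ^ 2
      = -4 * Pt p ^ 2 * d3 F p ^ 2 + 4 * Pt p * (d3 F p * d3 Pt p)
        + exp (4 * F p) * d3 A p ^ 2 := by
    unfold d3
    linear_combination gram_fderiv_form hF' hA hPt (0, 1) (0, 1)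
  rw [ricci33, form, planeLaplacian_conformalExponent hF hK,
    stress11_conformalExponent hF' (hK.differentiableAt (by norm_num)), h11]
  unfold twistOperatorF quadratureOperatorK planeLaplacian gradInner stress11 twistWeight
  field_simp
  ring

lemma ricci13_eq_zero (hF : DifferentiableAt ℝ F p) (hA : DifferentiableAt ℝ A p)
    (hPt : DifferentiableAt ℝ Pt p) (hK : DifferentiableAt ℝ K p) (hPt0 : Pt p ≠ 0)
    (h13 : stress13 Pt K p = d1 (d3 Pt) p
      + Pt p * stress13 F F p - twistWeight F Pt p * stress13 A A p) :
    ricci13 F A Pt K p = 0 := by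
  have form : 1 / 2 * (d1 (gramF F) p * d3 (gramL F A Pt) p + d3 (gramF F) p * d1 (gramL F A Pt) p)
      + d1 (gramK F A) p * d3 (gramK F A) p = -4 * Pt p ^ 2 * (d1 F p * d3 F p)
        + 2 * Pt p * (d1 F p * d3 Pt p + d3 F p * d1 Pt p)
        + exp (4 * F p) * (d1 A p * d3 A p) :=
    gram_fderiv_form hF hA hPt (1, 0) (0, 1)
  rw [ricci13, form, stress13_conformalExponent hF hK, h13]
  unfold stress13 twistWeight
  field_simp
  ring

end Ricci

section Fluid

variable {κ : ℝ} {F A Pt K ε P w : ℝ × ℝ → ℝ} {p : ℝ × ℝ}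

/-- The squared norm `E` of the fluid's four-velocity direction `∂ₜ + Ω ∂_φ`, in terms of the
angular velocity `w = Ω / c`. -/
noncomputable def fluidNorm (F A Pt w : ℝ × ℝ → ℝ) (p : ℝ × ℝ) : ℝ :=
  exp (2 * F p) * (1 + w p * A p) ^ 2 - exp (-(2 * F p)) * w p ^ 2 * Pt p ^ 2

/-- The Euler relation at `p` for a perfect fluid rotating with angular velocity `w = Ω / c`:
the pressure gradient balances the gradient of the metric coefficients, with `w` frozen. -/
def EulerRelation (F A Pt ε P w : ℝ × ℝ → ℝ) (p : ℝ × ℝ) : Prop :=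
  ∀ v, fderiv ℝ P p v = (ε p + P p) * (1 / (2 * fluidNorm F A Pt w p))
    * (-fderiv ℝ (gramF F) p v + 2 * w p * fderiv ℝ (gramK F A) p v
      + w p ^ 2 * fderiv ℝ (gramL F A Pt) p v)

/-- The reduced field equations (N.9a), (N.9b), (N.9c), (Ya), (Yb) at the point `p`, in terms of
the angular velocity `w = Ω / c`. -/
structure ReducedEquations (κ : ℝ) (F A Pt K ε P w : ℝ × ℝ → ℝ) (p : ℝ × ℝ) : Prop where
  operatorF : twistOperatorF F A Pt p = κ / 2 * exp (conformalExponent F K p)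
    * ((ε p + P p) * (exp (2 * F p) * (1 + w p * A p) ^ 2
      + exp (-(2 * F p)) * w p ^ 2 * Pt p ^ 2) / fluidNorm F A Pt w p + 2 * P p)
  operatorA : twistOperatorA F A Pt p = -(2 * κ) * exp (conformalExponent F K p) * (ε p + P p)
    * (exp (-(2 * F p)) * w p * Pt p ^ 2 * (1 + w p * A p)) / fluidNorm F A Pt w p
  laplacian : planeLaplacian Pt p = 2 * κ * exp (conformalExponent F K p) * P p * Pt p
  quadrature11 : stress11 Pt K p = 1 / 2 * (d1 (d1 Pt) p - d3 (d3 Pt) p)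
    + Pt p * stress11 F F p - twistWeight F Pt p * stress11 A A p
  quadrature13 : stress13 Pt K p = d1 (d3 Pt) p
    + Pt p * stress13 F F p - twistWeight F Pt p * stress13 A A p

lemma EulerRelation.fderiv_pressure (h : EulerRelation F A Pt ε P w p)
    (hF : DifferentiableAt ℝ F p) (hA : DifferentiableAt ℝ A p) (hPt : DifferentiableAt ℝ Pt p)
    (v : ℝ × ℝ) :
    fderiv ℝ P p v = (ε p + P p) / fluidNorm F A Pt w p
      * (exp (-(2 * F p)) * w p ^ 2 * Pt p * fderiv ℝ Pt p v
        - (exp (2 * F p) * (1 + w p * A p) ^ 2 + exp (-(2 * F p)) * w p ^ 2 * Pt p ^ 2)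
          * fderiv ℝ F p v
        - exp (2 * F p) * w p * (1 + w p * A p) * fderiv ℝ A p v) := by
  rw [h v, fderiv_gramF hF, fderiv_gramK hF hA, fderiv_gramL hF hA hPt]
  ring

lemma fderiv_pressure_source (hF : DifferentiableAt ℝ F p) (hPt : DifferentiableAt ℝ Pt p)
    (hK : DifferentiableAt ℝ K p) (hP : DifferentiableAt ℝ P p) (v : ℝ × ℝ) :
    fderiv ℝ (fun q => 2 * κ * exp (conformalExponent F K q) * P q * Pt q) p v =
      2 * κ * exp (conformalExponent F K p) * (2 * (fderiv ℝ K p v - fderiv ℝ F p v) * P p * Pt p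
        + fderiv ℝ P p v * Pt p + P p * fderiv ℝ Pt p v) := by
  have hm := (hF.hasFDerivAt.fun_neg.fun_add hK.hasFDerivAt).const_mul 2
  have h := congrArg (· v)
    (((hm.exp.const_mul (2 * κ)).fun_mul hP.hasFDerivAt).fun_mul hPt.hasFDerivAt).fderiv
  refine h.trans ?_
  simp only [smul_add, smul_neg, add_apply, smul_apply, smul_eq_mul, neg_apply, conformalExponent]
  ring

theorem quadratureOperatorK_eq (hF : ContDiffAt ℝ 2 F p) (hA : ContDiffAt ℝ 2 A p)
    (hPt : ContDiffAt ℝ 3 Pt p) (hK : ContDiffAt ℝ 2 K p) (hP : DifferentiableAt ℝ P p)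
    (hPt0 : Pt p ≠ 0) (hdPt : fderiv ℝ Pt p ≠ 0)
    (reduced : ∀ᶠ q in nhds p, ReducedEquations κ F A Pt K ε P w q)
    (euler : EulerRelation F A Pt ε P w p) :
    quadratureOperatorK F A Pt K p = κ * exp (conformalExponent F K p)
      * (P p + (ε p + P p) * (exp (-(2 * F p)) * w p ^ 2 * Pt p ^ 2) / fluidNorm F A Pt w p) := by
  obtain ⟨v, hv⟩ : ∃ v, fderiv ℝ Pt p v ≠ 0 := by
    contrapose! hdPt
    exact ContinuousLinearMap.ext hdPt
  have dF : DifferentiableAt ℝ F p := hF.differentiableAt (by norm_num)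
  have dA : DifferentiableAt ℝ A p := hA.differentiableAt (by norm_num)
  have dPt : DifferentiableAt ℝ Pt p := hPt.differentiableAt (by norm_num)
  have dK : DifferentiableAt ℝ K p := hK.differentiableAt (by norm_num)
  have at_p := reduced.self_of_nhds
  have divergence := quadrature_divergence_eq_operators hF hA hPt hK hPt0
    (reduced.mono fun q hq => hq.quadrature11) (reduced.mono fun q hq => hq.quadrature13) v
  have laplacian : planeLaplacian Pt =ᶠ[nhds p] _ := reduced.mono fun q hq => hq.laplacian
  rw [laplacian.fderiv_eq, fderiv_pressure_source dF dPt dK hP, at_p.laplacian, at_p.operatorF,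
    at_p.operatorA, euler.fderiv_pressure dF dA dPt] at divergence
  have hexp : exp (4 * F p) * exp (-(2 * F p)) = exp (2 * F p) := by
    rw [← exp_add]; congr 1; ring
  refine mul_left_cancel₀ hv ?_
  rw [← hexp] at divergence
  linear_combination (norm := (field_simp; ring)) divergence

lemma ReducedEquations.ricci_source (h : ReducedEquations κ F A Pt K ε P w p) (hPt0 : Pt p ≠ 0)
    (hE0 : fluidNorm F A Pt w p ≠ 0)
    (hK : quadratureOperatorK F A Pt K p = κ * exp (conformalExponent F K p)
      * (P p + (ε p + P p) * (exp (-(2 * F p)) * w p ^ 2 * Pt p ^ 2) / fluidNorm F A Pt w p)) :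
    twistOperatorF F A Pt p - planeLaplacian Pt p / (2 * Pt p) - quadratureOperatorK F A Pt K p
      = κ * (exp (conformalExponent F K p) / 2 * (ε p - P p)) := by
  rw [h.operatorF, h.laplacian, hK]
  field_simp
  unfold fluidNorm
  ring

theorem ricci_eq_source (hF : ContDiffAt ℝ 2 F p) (hA : ContDiffAt ℝ 2 A p)
    (hPt : ContDiffAt ℝ 3 Pt p) (hK : ContDiffAt ℝ 2 K p) (hP : DifferentiableAt ℝ P p)
    (hPt0 : Pt p ≠ 0) (hE0 : fluidNorm F A Pt w p ≠ 0) (hdPt : fderiv ℝ Pt p ≠ 0)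
    (reduced : ∀ᶠ q in nhds p, ReducedEquations κ F A Pt K ε P w q)
    (euler : EulerRelation F A Pt ε P w p) :
    ricci11 F A Pt K p = κ * (exp (conformalExponent F K p) / 2 * (ε p - P p)) ∧
    ricci33 F A Pt K p = κ * (exp (conformalExponent F K p) / 2 * (ε p - P p)) ∧
    ricci13 F A Pt K p = 0 := by
  have dF : DifferentiableAt ℝ F p := hF.differentiableAt (by norm_num)
  have dA : DifferentiableAt ℝ A p := hA.differentiableAt (by norm_num)
  have dPt : DifferentiableAt ℝ Pt p := hPt.differentiableAt (by norm_num)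
  have dK : DifferentiableAt ℝ K p := hK.differentiableAt (by norm_num)
  have at_p := reduced.self_of_nhds
  have source := at_p.ricci_source hPt0 hE0
    (quadratureOperatorK_eq hF hA hPt hK hP hPt0 hdPt reduced euler)
  exact ⟨(ricci11_eq_operators hF dA dPt hK hPt0 at_p.quadrature11).trans source,
    (ricci33_eq_operators hF dA dPt hK hPt0 at_p.quadrature11).trans source,
    ricci13_eq_zero dF dA dPt dK hPt0 at_p.quadrature13⟩

lemma eulerRelation_of_partials
    (h1 : d1 P p = (ε p + P p) * (1 / (2 * fluidNorm F A Pt w p))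
      * (-d1 (gramF F) p + 2 * w p * d1 (gramK F A) p + w p ^ 2 * d1 (gramL F A Pt) p))
    (h3 : d3 P p = (ε p + P p) * (1 / (2 * fluidNorm F A Pt w p))
      * (-d3 (gramF F) p + 2 * w p * d3 (gramK F A) p + w p ^ 2 * d3 (gramL F A Pt) p)) :
    EulerRelation F A Pt ε P w p := by
  intro v
  simp only [fderiv_eq_d1_add_d3 _ p v, h1, h3]
  ring

lemma fderiv_eq_mul_of_vacuum {O₁ O₂ : Set (ℝ × ℝ)} {h X : ℝ × ℝ → ℝ} {v : ℝ × ℝ}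
    (hO₂ : IsOpen O₂) (hP : ∀ q ∈ O₂, P q = 0) (hh : ∀ q ∈ O₂, h q = 0)
    (hfluid : ∀ q ∈ O₁, fderiv ℝ P q v = h q * X q) :
    ∀ q ∈ O₁ ∪ O₂, fderiv ℝ P q v = h q * X q := by
  rintro q (hq | hq)
  · exact hfluid q hq
  · have zero : P =ᶠ[nhds q] fun _ => 0 := by
      filter_upwards [hO₂.mem_nhds hq] with r hr using hP r hr
    simp [zero.fderiv_eq, hh q hq]

lemma differentiableOn_union_of_vacuum {O₁ O₂ : Set (ℝ × ℝ)} (hO₁ : IsOpen O₁) (hO₂ : IsOpen O₂)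
    (hP₁ : DifferentiableOn ℝ P O₁) (hP₂ : ∀ q ∈ O₂, P q = 0) :
    DifferentiableOn ℝ P (O₁ ∪ O₂) :=
  hP₁.union_of_isOpen ((differentiableOn_const 0).congr hP₂) hO₁ hO₂

end Fluid

theorem stmt_3_general
    (c κ : ℝ) (hc : c ≠ 0)
    (O : Set (ℝ × ℝ)) (hO : IsOpen O)
    (F A Pt K ε P Ω : ℝ × ℝ → ℝ)
    (hF : ContDiffOn ℝ 2 F O) (hA : ContDiffOn ℝ 2 A O)
    (hPt : ContDiffOn ℝ 3 Pt O) (hK : ContDiffOn ℝ 2 K O) (hP : DifferentiableOn ℝ P O)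
    (hPt0 : ∀ p ∈ O, Pt p ≠ 0)
    (f k m l E : ℝ × ℝ → ℝ)
    (hf : f = fun p => exp (2 * F p))
    (hk : k = fun p => -exp (2 * F p) * A p)
    (hm : m = fun p => 2 * (-F p + K p))
    (hl : l = fun p => -exp (2 * F p) * (A p) ^ 2 + exp (-(2 * F p)) * (Pt p) ^ 2)
    (hE : E = fun p => exp (2 * F p) * (1 + Ω p * A p / c) ^ 2
      - exp (-(2 * F p)) * (Ω p ^ 2 / c ^ 2) * (Pt p) ^ 2)
    (hE0 : ∀ p ∈ O, E p ≠ 0)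
    (hC : ∀ p ∈ O, (d1 Pt p) ^ 2 + (d3 Pt p) ^ 2 ≠ 0)
    (hEuler1 : ∀ p ∈ O, d1 P p = (ε p + P p) * (1 / (2 * E p))
      * (-(d1 f p) + 2 * (Ω p / c) * d1 k p + (Ω p ^ 2 / c ^ 2) * d1 l p))
    (hEuler3 : ∀ p ∈ O, d3 P p = (ε p + P p) * (1 / (2 * E p))
      * (-(d3 f p) + 2 * (Ω p / c) * d3 k p + (Ω p ^ 2 / c ^ 2) * d3 l p))
    (R11 R33 R13 : ℝ × ℝ → ℝ)
    (hR11 : ∀ p ∈ O, 2 * R11 p =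
      -(d1 (d1 m) p) - d3 (d3 m) p - 2 * d1 (d1 Pt) p / Pt p
        + (1 / Pt p) * (d1 m p * d1 Pt p - d3 m p * d3 Pt p)
        + (1 / (Pt p) ^ 2) * (d1 f p * d1 l p + (d1 k p) ^ 2))
    (hR33 : ∀ p ∈ O, 2 * R33 p =
      -(d1 (d1 m) p) - d3 (d3 m) p - 2 * d3 (d3 Pt) p / Pt p
        - (1 / Pt p) * (d1 m p * d1 Pt p - d3 m p * d3 Pt p)
        + (1 / (Pt p) ^ 2) * (d3 f p * d3 l p + (d3 k p) ^ 2))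
    (hR13 : ∀ p ∈ O, 2 * R13 p =
      -(2 * d1 (d3 Pt) p / Pt p)
        + (1 / Pt p) * (d3 m p * d1 Pt p + d1 m p * d3 Pt p)
        + (1 / (2 * (Pt p) ^ 2)) * (d1 f p * d3 l p + d1 l p * d3 f p + 2 * d1 k p * d3 k p))
    (S11 : ℝ × ℝ → ℝ)
    (hS11 : S11 = fun p => (exp (m p) / 2) * (ε p - P p))
    (hN9a : ∀ p ∈ O,
      d1 (d1 F) p + d3 (d3 F) p
        + (1 / Pt p) * (d1 Pt p * d1 F p + d3 Pt p * d3 F p)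
        + (exp (4 * F p) / (2 * (Pt p) ^ 2)) * ((d1 A p) ^ 2 + (d3 A p) ^ 2)
      = (κ / 2) * exp (2 * (-F p + K p)) *
          ((ε p + P p) * (exp (2 * F p) * (1 + Ω p * A p / c) ^ 2
            + exp (-(2 * F p)) * (Ω p ^ 2 / c ^ 2) * (Pt p) ^ 2) / E p + 2 * P p))
    (hN9b : ∀ p ∈ O,
      d1 (d1 A) p + d3 (d3 A) p
        - (1 / Pt p) * (d1 Pt p * d1 A p + d3 Pt p * d3 A p)
        + 4 * (d1 F p * d1 A p + d3 F p * d3 A p)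
      = -(2 * κ) * exp (2 * (-F p + K p)) * (ε p + P p) *
          (exp (-(2 * F p)) * (Ω p / c) * (Pt p) ^ 2 * (1 + Ω p * A p / c)) / E p)
    (hN9c : ∀ p ∈ O,
      d1 (d1 Pt) p + d3 (d3 Pt) p
      = 2 * κ * exp (2 * (-F p + K p)) * P p * Pt p)
    (hYa : ∀ p ∈ O,
      d1 Pt p * d1 K p - d3 Pt p * d3 K p
      = (1 / 2) * (d1 (d1 Pt) p - d3 (d3 Pt) p)
        + Pt p * ((d1 F p) ^ 2 - (d3 F p) ^ 2)
        - (exp (4 * F p) / (4 * Pt p)) * ((d1 A p) ^ 2 - (d3 A p) ^ 2))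
    (hYb : ∀ p ∈ O,
      d3 Pt p * d1 K p + d1 Pt p * d3 K p
      = d1 (d3 Pt) p + 2 * Pt p * d1 F p * d3 F p
        - (exp (4 * F p) / (2 * Pt p)) * (d1 A p * d3 A p)) :
    (∀ p ∈ O, R11 p = κ * S11 p) ∧
    (∀ p ∈ O, R33 p = κ * S11 p) ∧
    (∀ p ∈ O, R13 p = 0) := by
  obtain ⟨w, rfl⟩ : ∃ w : ℝ × ℝ → ℝ, Ω = fun p => c * w p :=
    ⟨fun p => Ω p / c, funext fun p => (mul_div_cancel₀ (Ω p) hc).symm⟩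
  have cancel_mul (x a : ℝ) : c * x * a / c = x * a := by
    rw [mul_assoc, mul_div_cancel_left₀ _ hc]
  have cancel_sq (x : ℝ) : (c * x) ^ 2 / c ^ 2 = x ^ 2 := by
    rw [mul_pow, mul_div_cancel_left₀ _ (pow_ne_zero 2 hc)]
  simp only [cancel_mul, cancel_sq, mul_div_cancel_left₀ _ hc] at hE hEuler1 hEuler3 hN9a hN9b
  obtain rfl : f = gramF F := hf
  obtain rfl : k = gramK F A := hk
  obtain rfl : m = conformalExponent F K := hm
  obtain rfl : l = gramL F A Pt := hl
  obtain rfl : E = fluidNorm F A Pt w := hE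
  have reduced : ∀ p ∈ O, ReducedEquations κ F A Pt K ε P w p := fun p hp =>
    { operatorF := hN9a p hp
      operatorA := hN9b p hp
      laplacian := hN9c p hp
      quadrature11 := by
        unfold stress11 twistWeight
        linear_combination hYa p hp
      quadrature13 := by
        unfold stress13 twistWeight
        linear_combination hYb p hp }
  have einstein : ∀ p ∈ O, ricci11 F A Pt K p = κ * S11 p ∧ ricci33 F A Pt K p = κ * S11 p ∧
      ricci13 F A Pt K p = 0 := by
    intro p hp
    have hnhds := hO.mem_nhds hp
    rw [hS11]
    exact ricci_eq_source (hF.contDiffAt hnhds) (hA.contDiffAt hnhds) (hPt.contDiffAt hnhds)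
      (hK.contDiffAt hnhds) (hP.differentiableAt hnhds) (hPt0 p hp) (hE0 p hp)
      (fun h => hC p hp (by simp [d1, d3, h])) (Filter.eventually_of_mem hnhds reduced)
      (eulerRelation_of_partials (hEuler1 p hp) (hEuler3 p hp))
  refine ⟨fun p hp => ?_, fun p hp => ?_, fun p hp => ?_⟩
  · rw [← (einstein p hp).1, ricci11, planeLaplacian, stress11]
    linear_combination hR11 p hp / 2
  · rw [← (einstein p hp).2.1, ricci33, planeLaplacian, stress11]
    linear_combination hR33 p hp / 2
  · rw [← (einstein p hp).2.2, ricci13, stress13]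
    linear_combination hR13 p hp / 2

/-- **Proposition 4 of the paper.** Under (C), with `O = O₁ ∪ O₂`, `Ω` constant on `O₁`,
vacuum on `O₂`, `Pt` of class `C³`, `P` of class `C¹` on `O₁` and the Euler relation on `O₁`:
the reduced equations (N.9a)(N.9b)(N.9c)(Ya)(Yb) imply (36d)(36e)(36f). -/
theorem stmt_3
    (c κ : ℝ) (hc : 0 < c) (hκ : 0 < κ)
    (O : Set (ℝ × ℝ)) (hO : IsOpen O) (hOw : ∀ p ∈ O, 0 < p.1)
    (F A Pt K ρ P Ω : ℝ × ℝ → ℝ)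
    (hF : ContDiffOn ℝ 2 F O) (hA : ContDiffOn ℝ 2 A O)
    (hPt : ContDiffOn ℝ 3 Pt O) (hK : ContDiffOn ℝ 2 K O)
    (hPtpos : ∀ p ∈ O, 0 < Pt p)
    (hρc : ContinuousOn ρ O) (hPc : ContinuousOn P O) (hΩc : ContinuousOn Ω O)
    (hρ0 : ∀ p ∈ O, 0 ≤ ρ p) (hP0 : ∀ p ∈ O, 0 ≤ P p)
    (ε f k m l E Sg : ℝ × ℝ → ℝ)
    (hε : ε = fun p => c ^ 2 * ρ p)
    (hf : f = fun p => exp (2 * F p))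
    (hk : k = fun p => -exp (2 * F p) * A p)
    (hm : m = fun p => 2 * (-F p + K p))
    (hl : l = fun p => -exp (2 * F p) * (A p) ^ 2 + exp (-(2 * F p)) * (Pt p) ^ 2)
    (hE : E = fun p => exp (2 * F p) * (1 + Ω p * A p / c) ^ 2
      - exp (-(2 * F p)) * (Ω p ^ 2 / c ^ 2) * (Pt p) ^ 2)
    (hEpos : ∀ p ∈ O, 0 < E p)
    (hSg : Sg = fun p => d1 f p * d1 l p + d3 f p * d3 l p + (d1 k p) ^ 2 + (d3 k p) ^ 2)
    (hC : ∀ p ∈ O, (d1 Pt p) ^ 2 + (d3 Pt p) ^ 2 ≠ 0)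
    (O₁ O₂ : Set (ℝ × ℝ)) (hO₁ : IsOpen O₁) (hO₂ : IsOpen O₂) (hO12 : O = O₁ ∪ O₂)
    (hΩconst : ∃ Ωc : ℝ, ∀ p ∈ O₁, Ω p = Ωc)
    (hvac : ∀ p ∈ O₂, ρ p = 0 ∧ P p = 0)
    (hPC1 : ContDiffOn ℝ 1 P O₁)
    (hEuler1 : ∀ p ∈ O₁, d1 P p = (ε p + P p) * (1 / (2 * E p))
      * (-(d1 f p) + 2 * (Ω p / c) * d1 k p + (Ω p ^ 2 / c ^ 2) * d1 l p))
    (hEuler3 : ∀ p ∈ O₁, d3 P p = (ε p + P p) * (1 / (2 * E p))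
      * (-(d3 f p) + 2 * (Ω p / c) * d3 k p + (Ω p ^ 2 / c ^ 2) * d3 l p))
    (R11 R33 R13 : ℝ × ℝ → ℝ)
    (hR11 : ∀ p ∈ O, 2 * R11 p =
      -(d1 (d1 m) p) - d3 (d3 m) p - 2 * d1 (d1 Pt) p / Pt p
        + (1 / Pt p) * (d1 m p * d1 Pt p - d3 m p * d3 Pt p)
        + (1 / (Pt p) ^ 2) * (d1 f p * d1 l p + (d1 k p) ^ 2))
    (hR33 : ∀ p ∈ O, 2 * R33 p =
      -(d1 (d1 m) p) - d3 (d3 m) p - 2 * d3 (d3 Pt) p / Pt p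
        - (1 / Pt p) * (d1 m p * d1 Pt p - d3 m p * d3 Pt p)
        + (1 / (Pt p) ^ 2) * (d3 f p * d3 l p + (d3 k p) ^ 2))
    (hR13 : ∀ p ∈ O, 2 * R13 p =
      -(2 * d1 (d3 Pt) p / Pt p)
        + (1 / Pt p) * (d3 m p * d1 Pt p + d1 m p * d3 Pt p)
        + (1 / (2 * (Pt p) ^ 2)) * (d1 f p * d3 l p + d1 l p * d3 f p + 2 * d1 k p * d3 k p))
    (S11 : ℝ × ℝ → ℝ)
    (hS11 : S11 = fun p => (exp (m p) / 2) * (ε p - P p))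
    (hN9a : ∀ p ∈ O,
      d1 (d1 F) p + d3 (d3 F) p
        + (1 / Pt p) * (d1 Pt p * d1 F p + d3 Pt p * d3 F p)
        + (exp (4 * F p) / (2 * (Pt p) ^ 2)) * ((d1 A p) ^ 2 + (d3 A p) ^ 2)
      = (κ / 2) * exp (2 * (-F p + K p)) *
          ((ε p + P p) * (exp (2 * F p) * (1 + Ω p * A p / c) ^ 2
            + exp (-(2 * F p)) * (Ω p ^ 2 / c ^ 2) * (Pt p) ^ 2) / E p + 2 * P p))
    (hN9b : ∀ p ∈ O,
      d1 (d1 A) p + d3 (d3 A) p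
        - (1 / Pt p) * (d1 Pt p * d1 A p + d3 Pt p * d3 A p)
        + 4 * (d1 F p * d1 A p + d3 F p * d3 A p)
      = -(2 * κ) * exp (2 * (-F p + K p)) * (ε p + P p) *
          (exp (-(2 * F p)) * (Ω p / c) * (Pt p) ^ 2 * (1 + Ω p * A p / c)) / E p)
    (hN9c : ∀ p ∈ O,
      d1 (d1 Pt) p + d3 (d3 Pt) p
      = 2 * κ * exp (2 * (-F p + K p)) * P p * Pt p)
    (hYa : ∀ p ∈ O,
      d1 Pt p * d1 K p - d3 Pt p * d3 K p
      = (1/2) * (d1 (d1 Pt) p - d3 (d3 Pt) p)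
        + Pt p * ((d1 F p) ^ 2 - (d3 F p) ^ 2)
        - (exp (4 * F p) / (4 * Pt p)) * ((d1 A p) ^ 2 - (d3 A p) ^ 2))
    (hYb : ∀ p ∈ O,
      d3 Pt p * d1 K p + d1 Pt p * d3 K p
      = d1 (d3 Pt) p + 2 * Pt p * d1 F p * d3 F p
        - (exp (4 * F p) / (2 * Pt p)) * (d1 A p * d3 A p)) :
    (∀ p ∈ O, R11 p = κ * S11 p) ∧
    (∀ p ∈ O, R33 p = κ * S11 p) ∧
    (∀ p ∈ O, R13 p = 0) := by
  subst hO12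
  have vacuum : ∀ q ∈ O₂, (ε q + P q) * (1 / (2 * E q)) = 0 := fun q hq => by
    simp [hε, hvac q hq]
  have euler1 := fderiv_eq_mul_of_vacuum hO₂ (fun q hq => (hvac q hq).2) vacuum hEuler1
  have euler3 := fderiv_eq_mul_of_vacuum hO₂ (fun q hq => (hvac q hq).2) vacuum hEuler3
  exact stmt_3_general c κ hc.ne' _ hO F A Pt K ε P Ω hF hA hPt hK
    (differentiableOn_union_of_vacuum hO₁ hO₂ (hPC1.differentiableOn one_ne_zero)
      fun q hq => (hvac q hq).2)
    (fun p hp => (hPtpos p hp).ne') f k m l E hf hk hm hl hE (fun p hp => (hEpos p hp).ne') hC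
    euler1 euler3 R11 R33 R13 hR11 hR33 hR13 S11 hS11 hN9a hN9b hN9c hYa hYb
end
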